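/- Let n ≥ 2 and let f : Γ₊ → ℝ be smooth, symmetric, convex, strictly positive, strictly increasing in each argument, and positively homogeneous of degree one. Then f is inverse concave, i.e. the dual function f_*(x) = f(x₁⁻¹, …, xₙ⁻¹)⁻¹ is concave on Γ₊. -/

import Mathlib

open Filter Topology Matrix

noncomputable section

/-- The open positive cone Γ₊ ⊂ ℝⁿ. -/
def posCone (n : ℕ) : Set (Fin n → ℝ) := {x | ∀ i, 0 < x i}

/-- The dual function f_*(x) = f(x₁⁻¹,…,xₙ⁻¹)⁻¹. -/
def dualF (n : ℕ) (f : (Fin n → ℝ) → ℝ) : (Fin n → ℝ) → ℝ :=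
  fun x => (f fun i => (x i)⁻¹)⁻¹

/-- First partial derivative ḟ^i(x) = ∂f/∂x_i(x). -/
def D1 (n : ℕ) (f : (Fin n → ℝ) → ℝ) (x : Fin n → ℝ) (i : Fin n) : ℝ :=
  fderiv ℝ f x (Pi.single i 1)

/-- Second partial derivative f̈^{ij}(x) = ∂²f/∂x_i∂x_j(x). -/
def D2 (n : ℕ) (f : (Fin n → ℝ) → ℝ) (x : Fin n → ℝ) (i j : Fin n) : ℝ :=
  fderiv ℝ (fun y => fderiv ℝ f y (Pi.single i 1)) x (Pi.single j 1)

/-!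
The function `x ↦ f (x⁻¹)` is convex, because coordinatewise inversion is convex on the positive
cone and `f` is convex and increasing. Its sublevel sets are the superlevel sets of the dual
function `f_*`, so `f_*` is quasiconcave; and a positive quasiconcave function that is homogeneous
of degree one is concave.
-/

section LinearOrderedField

variable {𝕜 : Type*} [Field 𝕜] [LinearOrder 𝕜] [IsStrictOrderedRing 𝕜]

theorem quasiconcaveOn_inv_of_quasiconvexOn {E : Type*} [AddCommMonoid E] [SMul 𝕜 E] {s : Set E}
    {f : E → 𝕜} (hf : QuasiconvexOn 𝕜 s f) (hpos : ∀ x ∈ s, 0 < f x) :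
    QuasiconcaveOn 𝕜 s fun x => (f x)⁻¹ := by
  refine quasiconcaveOn_iff_min_le.2 ⟨hf.convex, fun x hx y hy a b ha hb hab => ?_⟩
  have hz : a • x + b • y ∈ s := hf.convex hx hy ha hb hab
  have hmax : f (a • x + b • y) ≤ max (f x) (f y) :=
    (quasiconvexOn_iff_le_max.1 hf).2 hx hy ha hb hab
  rcases le_max_iff.1 hmax with hzx | hzy
  · exact min_le_of_left_le (inv_anti₀ (hpos _ hz) hzx)
  · exact min_le_of_right_le (inv_anti₀ (hpos _ hz) hzy)

theorem concaveOn_of_quasiconcaveOn_of_homogeneous {E : Type*} [AddCommMonoid E] [Module 𝕜 E]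
    {s : Set E} {f : E → 𝕜} (hs : ∀ k : 𝕜, 0 < k → ∀ x ∈ s, k • x ∈ s)
    (hf : QuasiconcaveOn 𝕜 s f) (hpos : ∀ x ∈ s, 0 < f x)
    (hhom : ∀ k : 𝕜, 0 < k → ∀ x ∈ s, f (k • x) = k * f x) : ConcaveOn 𝕜 s f := by
  refine concaveOn_iff_forall_pos.2 ⟨hf.convex, fun x hx y hy a b ha hb hab => ?_⟩
  have normalized_mem : ∀ z ∈ s, (f z)⁻¹ • z ∈ {w ∈ s | 1 ≤ f w} := fun z hz =>
    ⟨hs _ (inv_pos.2 (hpos z hz)) z hz, by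
      rw [hhom _ (inv_pos.2 (hpos z hz)) z hz, inv_mul_cancel₀ (hpos z hz).ne']⟩
  set t := a * f x + b * f y
  have hax : 0 < a * f x := mul_pos ha (hpos x hx)
  have hby : 0 < b * f y := mul_pos hb (hpos y hy)
  have ht : 0 < t := add_pos hax hby
  -- `t⁻¹ • (a • x + b • y)` is a convex combination of the normalizations of `x` and `y`.
  have hcomb : (a * f x / t) • (f x)⁻¹ • x + (b * f y / t) • (f y)⁻¹ • y
      = t⁻¹ • (a • x + b • y) := by
    have hfx := (hpos x hx).ne'
    have hfy := (hpos y hy).ne'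
    rw [smul_add, smul_smul, smul_smul, smul_smul, smul_smul]
    congr 2 <;> field_simp
  have hlevel : 1 ≤ f (t⁻¹ • (a • x + b • y)) := by
    rw [← hcomb]
    exact (hf 1 (normalized_mem x hx) (normalized_mem y hy) (div_pos hax ht).le
      (div_pos hby ht).le (by rw [← add_div, div_self ht.ne'])).2
  rwa [hhom _ (inv_pos.2 ht) _ (hf.convex hx hy ha.le hb.le hab), le_inv_mul_iff₀ ht,
    mul_one] at hlevel

variable {ι : Type*}

theorem convexOn_inv_pi_pos : ConvexOn 𝕜 {x : ι → 𝕜 | ∀ i, 0 < x i} fun x => x⁻¹ := by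
  refine ⟨fun x hx y hy a b ha hb hab i => convex_Ioi 0 (hx i) (hy i) ha hb hab,
    fun x hx y hy a b ha hb hab i => ?_⟩
  simpa only [_root_.zpow_neg_one, Pi.add_apply, Pi.smul_apply, Pi.inv_apply] using
    (convexOn_zpow (-1)).2 (hx i) (hy i) ha hb hab

theorem convexOn_comp_inv_pi_pos {f : (ι → 𝕜) → 𝕜}
    (hconv : ConvexOn 𝕜 {x | ∀ i, 0 < x i} f) (hmono : MonotoneOn f {x | ∀ i, 0 < x i}) :
    ConvexOn 𝕜 {x | ∀ i, 0 < x i} fun x => f x⁻¹ := by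
  have himage : (fun x : ι → 𝕜 => x⁻¹) '' {x | ∀ i, 0 < x i} = {x | ∀ i, 0 < x i} := by
    ext x
    simp [Set.image_inv_eq_inv]
  exact ConvexOn.comp (by rwa [himage]) convexOn_inv_pi_pos (by rwa [himage])

theorem convex_implies_inverse_concave_general {f : (ι → 𝕜) → 𝕜}
    (hconv : ConvexOn 𝕜 {x | ∀ i, 0 < x i} f) (hmono : MonotoneOn f {x | ∀ i, 0 < x i})
    (hpos : ∀ x : ι → 𝕜, (∀ i, 0 < x i) → 0 < f x)
    (hhom : ∀ k : 𝕜, 0 < k → ∀ x : ι → 𝕜, (∀ i, 0 < x i) → f (k • x) = k * f x) :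
    ConcaveOn 𝕜 {x | ∀ i, 0 < x i} fun x => (f x⁻¹)⁻¹ := by
  have hinv : ∀ x : ι → 𝕜, (∀ i, 0 < x i) → ∀ i, 0 < x⁻¹ i := fun x hx i => inv_pos.2 (hx i)
  have hposInv : ∀ x : ι → 𝕜, (∀ i, 0 < x i) → 0 < f x⁻¹ := fun x hx => hpos _ (hinv x hx)
  have hquasi : QuasiconcaveOn 𝕜 {x : ι → 𝕜 | ∀ i, 0 < x i} fun x => (f x⁻¹)⁻¹ :=
    quasiconcaveOn_inv_of_quasiconvexOn (convexOn_comp_inv_pi_pos hconv hmono).quasiconvexOn hposInv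
  refine concaveOn_of_quasiconcaveOn_of_homogeneous
    (fun k hk x hx i => mul_pos hk (hx i)) hquasi
    (fun x hx => inv_pos.2 (hposInv x hx)) fun k hk x hx => ?_
  have hsmul : (k • x)⁻¹ = k⁻¹ • x⁻¹ := funext fun i => mul_inv k (x i)
  rw [hsmul, hhom _ (inv_pos.2 hk) _ (hinv x hx), mul_inv, inv_inv]

end LinearOrderedField

theorem monotoneOn_of_fderiv_single_nonneg {ι : Type*} [Finite ι] [DecidableEq ι]
    {f : (ι → ℝ) → ℝ} {s : Set (ι → ℝ)} (hs : Convex ℝ s)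
    (hf : ∀ x ∈ s, DifferentiableAt ℝ f x)
    (hf' : ∀ x ∈ s, ∀ i, 0 ≤ fderiv ℝ f x (Pi.single i 1)) : MonotoneOn f s := by
  have := Fintype.ofFinite ι
  intro x hx y hy hxy
  obtain ⟨z, hz, hmvt⟩ := domain_mvt
    (fun w hw => (hf w hw).hasFDerivAt.hasFDerivWithinAt) hs hx hy
  have hsum : fderiv ℝ f z (y - x) = ∑ i, (y - x) i * fderiv ℝ f z (Pi.single i 1) := by
    conv_lhs => rw [pi_eq_sum_univ' (y - x)]
    simp only [map_sum, map_smul, smul_eq_mul]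
  rw [← sub_nonneg, hmvt, hsum]
  exact Finset.sum_nonneg fun i _ =>
    mul_nonneg (sub_nonneg.2 (hxy i)) (hf' z (hs.segment_subset hx hy hz) i)

theorem isOpen_posCone (n : ℕ) : IsOpen (posCone n) := by
  simp only [posCone, Set.ofPred_forall]
  exact isOpen_iInter_of_finite fun i => isOpen_lt continuous_const (continuous_apply i)

/-- a smooth, symmetric, convex, positive, strictly increasing,
1-homogeneous `f` on Γ₊ is inverse concave: its dual `f_*` is concave on Γ₊. -/
theorem convex_implies_inverse_concave (n : ℕ) (hn : 2 ≤ n) (f : (Fin n → ℝ) → ℝ)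
    (hsmooth : ContDiffOn ℝ (⊤ : ℕ∞) f (posCone n))
    (hsym : ∀ σ : Equiv.Perm (Fin n), ∀ x ∈ posCone n, f (x ∘ σ) = f x)
    (hconv : ConvexOn ℝ (posCone n) f)
    (hpos : ∀ x ∈ posCone n, 0 < f x)
    (hmono : ∀ x ∈ posCone n, ∀ i, 0 < D1 n f x i)
    (hhom : ∀ k : ℝ, 0 < k → ∀ x ∈ posCone n, f (k • x) = k * f x) :
    ConcaveOn ℝ (posCone n) (dualF n f) :=
  convex_implies_inverse_concave_general hconv (monotoneOn_of_fderiv_single_nonneg hconv.1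
    (fun x hx => (hsmooth.contDiffAt ((isOpen_posCone n).mem_nhds hx)).differentiableAt (by simp))
    fun x hx i => (hmono x hx i).le) hpos hhom
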